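/- Reciprocity of the deterministic regions. Let K ≥ 1 and let n_00, n_11, …, n_KK and n_10, …, n_K0 be nonnegative integers, and write x⁺ = max(x,0). Define in ℝ^{K+1} the one-to-many region D = {(r_0,…,r_K) : 0 ≤ r_i ≤ n_ii for all 0 ≤ i ≤ K, and for every nonempty S ⊆ {1,…,K}, r_0 + Σ_{i∈S} r_i ≤ n_00 + Σ_{k=1}^{n_00} (|U_k^OTM ∩ S| − 1)⁺ + Σ_{i∈S} [(n_ii − n_i0)⁺ + (n_i0 − n_00)⁺]}, where U_k^OTM = {i : n_00 − n_i0 < k ≤ n_ii − n_i0 + n_00}. Define also the many-to-one outer-bound region C̄ of the reciprocal channel with direct gains ñ_ii = n_ii and cross gains ñ_0i = n_i0, namely C̄ = {r : 0 ≤ r_i ≤ n_ii for all i, and for every nonempty S, r_0 + Σ_{i∈S} r_i ≤ Σ_{i∈S}[(n_ii − n_i0)⁺ + (n_i0 − n_00)⁺] + Σ_{k=1}^{n_00} max(|Ũ_k ∩ S|, 1)}, where Ũ_k = {i : n_i0 − n_ii < k ≤ n_i0}. Then D = C̄: the capacity region of the deterministic one-to-many channel coincides with that of the reciprocal deterministic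 many-to-one channel. -/

import Mathlib

open Finset

/-- One-to-many channel: the set of users (`i ≠ 0`) experiencing interference from level `k`
of transmitter 0, `U_k^OTM = {i : n_{00} − n_{i0} < k ≤ n_{ii} − n_{i0} + n_{00}}`.
Here `n i = n_{ii}` (direct gains) and `g i = n_{i0}` (cross gains). -/
def UOTM (K : ℕ) (n g : Fin (K + 1) → ℕ) (k : ℕ) : Finset (Fin (K + 1)) :=
  Finset.univ.filter fun i => i ≠ 0 ∧
    (n 0 : ℤ) - (g i : ℤ) < (k : ℤ) ∧ (k : ℤ) ≤ (n i : ℤ) - (g i : ℤ) + (n 0 : ℤ)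

/-- Reciprocal many-to-one channel: the set of users causing interference on level `k` of
receiver 0, `Ũ_k = {i : n_{i0} − n_{ii} < k ≤ n_{i0}}`. -/
def Utilde (K : ℕ) (n g : Fin (K + 1) → ℕ) (k : ℕ) : Finset (Fin (K + 1)) :=
  Finset.univ.filter fun i => i ≠ 0 ∧
    (g i : ℤ) - (n i : ℤ) < (k : ℤ) ∧ (k : ℤ) ≤ (g i : ℤ)

/-- `(n_{ii} − n_{i0})⁺ + (n_{i0} − n_{00})⁺` (truncated subtraction on ℕ). -/
def ffreeOTM (K : ℕ) (n g : Fin (K + 1) → ℕ) (i : Fin (K + 1)) : ℕ :=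
  (n i - g i) + (g i - n 0)

/-- The one-to-many deterministic region `D`. -/
def DRegion (K : ℕ) (n g : Fin (K + 1) → ℕ) : Set (Fin (K + 1) → ℝ) :=
  {r | (∀ i, 0 ≤ r i ∧ r i ≤ (n i : ℝ)) ∧
    ∀ S : Finset (Fin (K + 1)), 0 ∉ S → S.Nonempty →
      r 0 + ∑ i ∈ S, r i ≤ (n 0 : ℝ) +
        (∑ k ∈ Finset.Icc 1 (n 0), (((UOTM K n g k ∩ S).card - 1 : ℕ) : ℝ)) +
        ∑ i ∈ S, (ffreeOTM K n g i : ℝ)}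

/-- The outer-bound region `C̄` of the reciprocal many-to-one channel (direct gains
`ñ_{ii} = n_{ii}`, cross gains `ñ_{0i} = n_{i0}`). -/
def CbarRegion (K : ℕ) (n g : Fin (K + 1) → ℕ) : Set (Fin (K + 1) → ℝ) :=
  {r | (∀ i, 0 ≤ r i ∧ r i ≤ (n i : ℝ)) ∧
    ∀ S : Finset (Fin (K + 1)), 0 ∉ S → S.Nonempty →
      r 0 + ∑ i ∈ S, r i ≤
        (∑ i ∈ S, (ffreeOTM K n g i : ℝ)) +
        ∑ k ∈ Finset.Icc 1 (n 0), (max (Utilde K n g k ∩ S).card 1 : ℝ)}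

/-!
Numbering the `n 0` levels from the opposite end, `k ↦ n 0 + 1 - k`, turns the interference set
`U_k^OTM` into `Ũ_k`. Since `1 + (c - 1)⁺ = max c 1`, spreading the term `n 0` of the one-to-many
bound over the levels, one unit each, gives the many-to-one bound for the same set of users.
-/

theorem sum_Icc_reflect {M : Type*} [AddCommMonoid M] (f : ℕ → M) (a b : ℕ) :
    ∑ k ∈ Icc a b, f (a + b - k) = ∑ k ∈ Icc a b, f k := by
  have h : b + 1 ≤ a + b + 1 := by omega
  simpa [← Ico_add_one_right_eq_Icc, add_assoc] using sum_Ico_reflect f a h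

theorem card_nsmul_add_sum_tsub {ι M : Type*} [AddCommMonoid M] [LinearOrder M]
    [CanonicallyOrderedAdd M] [Sub M] [OrderedSub M] (s : Finset ι) (f : ι → M) (a : M) :
    #s • a + ∑ i ∈ s, (f i - a) = ∑ i ∈ s, max (f i) a := by
  simp only [← sum_const, ← sum_add_distrib, add_tsub_eq_max, max_comm a]

section Levels

variable {K : ℕ} (n g : Fin (K + 1) → ℕ)

theorem utilde_reflect {k : ℕ} (hk : k ≤ n 0 + 1) :
    Utilde K n g (1 + n 0 - k) = UOTM K n g k := by
  ext i
  simp only [Utilde, UOTM, mem_filter_univ]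
  omega

theorem add_sum_card_uotm_inter_sub_one (S : Finset (Fin (K + 1))) :
    n 0 + ∑ k ∈ Icc 1 (n 0), (#(UOTM K n g k ∩ S) - 1) =
      ∑ k ∈ Icc 1 (n 0), max #(Utilde K n g k ∩ S) 1 :=
  calc
    _ = ∑ k ∈ Icc 1 (n 0), max #(UOTM K n g k ∩ S) 1 := by
      simpa using card_nsmul_add_sum_tsub (Icc 1 (n 0)) (fun k => #(UOTM K n g k ∩ S)) 1
    _ = ∑ k ∈ Icc 1 (n 0), max #(Utilde K n g (1 + n 0 - k) ∩ S) 1 :=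
      sum_congr rfl fun k hk => by rw [utilde_reflect n g (Nat.le_succ_of_le (mem_Icc.1 hk).2)]
    _ = ∑ k ∈ Icc 1 (n 0), max #(Utilde K n g k ∩ S) 1 :=
      sum_Icc_reflect (fun k => max #(Utilde K n g k ∩ S) 1) 1 (n 0)

end Levels

/-- Reciprocity of the deterministic regions: the capacity region of the deterministic
one-to-many channel coincides with that of the reciprocal deterministic many-to-one
channel, `D = C̄`. -/
theorem one_to_many_reciprocity (K : ℕ) (hK : 1 ≤ K) (n g : Fin (K + 1) → ℕ) :
    DRegion K n g = CbarRegion K n g := by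
  have bound_eq (S : Finset (Fin (K + 1))) :
      (n 0 : ℝ) + ∑ k ∈ Icc 1 (n 0), ((#(UOTM K n g k ∩ S) - 1 : ℕ) : ℝ) =
        ∑ k ∈ Icc 1 (n 0), max (#(Utilde K n g k ∩ S) : ℝ) 1 := by
    exact_mod_cast add_sum_card_uotm_inter_sub_one n g S
  simp only [DRegion, CbarRegion, bound_eq, add_comm]
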